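/- arXiv:1705.06814 — 7 statements merged into one kernel-verified Lean document; each statement's English description precedes it below -/
import Mathlib

section
/- Let K > 0, c̄ > 0, and let g : ℝ → ℝ be continuous and nonnegative with g(x) → +∞ as |x| → +∞. Define c(x, a) := K·1{a > 0} + c̄ a + g(x + a). Then c is inf-compact on ℝ × [0, +∞): for every λ ∈ ℝ, the set {(x, a) ∈ ℝ × ℝ : a ≥ 0 and c(x, a) ≤ λ} is a compact subset of ℝ². -/
/-!
Since `K > 0`, the level set is the union of two closed sets: the pairs with `a ≥ 0` that satisfy
the inequality with the setup cost charged, and the pairs with `a = 0` that satisfy it without.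
It is bounded because `g ≥ 0` forces `c̄ a ≤ λ`, while `g (x + a) ≤ λ` confines `x + a` to a bounded
interval by coercivity of `g`. A closed subset of a compact rectangle is compact.
-/

open Filter Set

/-- Inf-compactness of the one-step cost
`c(x,a) = K·1{a>0} + c̄·a + g(x+a)` on `ℝ × [0, ∞)` (Theorem 3.1):
all level sets are compact. -/
theorem stmt4
    (K cbar : ℝ) (hK : 0 < K) (hc : 0 < cbar)
    (g : ℝ → ℝ) (hgcont : Continuous g) (hgnn : ∀ x, 0 ≤ g x)
    (hgtop : Tendsto g atTop atTop) (hgbot : Tendsto g atBot atTop) :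
    ∀ lam : ℝ,
      IsCompact {p : ℝ × ℝ | 0 ≤ p.2 ∧
        (if 0 < p.2 then K else 0) + cbar * p.2 + g (p.1 + p.2) ≤ lam} := by
  intro lam
  obtain ⟨B, hB⟩ := eventually_atTop.1 (hgtop.eventually_gt_atTop lam)
  obtain ⟨A, hA⟩ := eventually_atBot.1 (hgbot.eventually_gt_atTop lam)
  have hclosed : IsClosed ({p : ℝ × ℝ | 0 ≤ p.2 ∧ K + cbar * p.2 + g (p.1 + p.2) ≤ lam} ∪
      {p : ℝ × ℝ | p.2 = 0 ∧ cbar * p.2 + g (p.1 + p.2) ≤ lam}) := by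
    refine IsClosed.union ?_ ?_
    · exact (isClosed_le continuous_const continuous_snd).inter
        (isClosed_le (f := fun p : ℝ × ℝ => K + cbar * p.2 + g (p.1 + p.2))
          (by fun_prop) continuous_const)
    · exact (isClosed_eq continuous_snd continuous_const).inter
        (isClosed_le (f := fun p : ℝ × ℝ => cbar * p.2 + g (p.1 + p.2))
          (by fun_prop) continuous_const)
  have heq : {p : ℝ × ℝ | 0 ≤ p.2 ∧
        (if 0 < p.2 then K else 0) + cbar * p.2 + g (p.1 + p.2) ≤ lam} =
      {p : ℝ × ℝ | 0 ≤ p.2 ∧ K + cbar * p.2 + g (p.1 + p.2) ≤ lam} ∪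
      {p : ℝ × ℝ | p.2 = 0 ∧ cbar * p.2 + g (p.1 + p.2) ≤ lam} := by
    ext ⟨x, a⟩
    simp only [mem_ofPred_eq, mem_union]
    constructor
    · rintro ⟨h0, h⟩
      split_ifs at h with ha
      · exact Or.inl ⟨h0, h⟩
      · exact Or.inr ⟨by linarith, by linarith⟩
    · rintro (⟨h0, h⟩ | ⟨h0, h⟩)
      · refine ⟨h0, ?_⟩
        split_ifs <;> linarith
      · refine ⟨h0.ge, ?_⟩
        rw [if_neg h0.not_gt]
        linarith
  refine IsCompact.of_isClosed_subset
    ((isCompact_Icc (a := A - lam / cbar) (b := B)).prod (isCompact_Icc (a := 0) (b := lam / cbar)))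
    (heq ▸ hclosed) ?_
  rintro ⟨x, a⟩ ⟨h0, h⟩
  dsimp only at h0 h
  have hi : (0 : ℝ) ≤ if 0 < a then K else 0 := by split_ifs <;> linarith
  have hca : 0 ≤ cbar * a := by positivity
  have hg := hgnn (x + a)
  have ha : a ≤ lam / cbar := by
    rw [le_div_iff₀ hc]
    linarith
  have hxB : x + a < B := by
    by_contra! hx
    linarith [hB _ hx]
  have hxA : A < x + a := by
    by_contra! hx
    linarith [hA _ hx]
  exact ⟨⟨by dsimp only; linarith, by dsimp only; linarith⟩, h0, ha⟩
end

section
/- Let μ be a Borel probability measure on ℝ with μ((−∞,0)) = 0, let α ∈ (0,1), K > 0, and let g : ℝ → ℝ be nonnegative. Let vₜ, Gₜ : ℝ → ℝ (t ∈ ℕ) satisfy: v₀ ≡ 0; for every t and every x the function d ↦ vₜ(x − d) is μ-integrable; Gₜ(x) = g(x) + α ∫ vₜ(x − d) dμ(d) for all x; and v_{t+1}(x) = min{ K + inf_{y ≥ x} Gₜ(y), Gₜ(x) } for all x. Then for all x ≤ y: vₜ(x) ≤ vₜ(y) + K for every t ≥ 1, and Gₜ(y) − Gₜ(x) ≥ g(y)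 − g(x) − αK for every t ∈ ℕ. -/
open MeasureTheory Filter Set

/-!
Ordering up to any level `z ≥ x` costs at most `K` on top of `Gₜ(z)`, so
`v_{t+1}(x) ≤ K + inf_{z ≥ x} Gₜ(z)`. If `x ≤ y`, this infimum is at most both `Gₜ(y)` and
`inf_{z ≥ y} Gₜ(z)`, hence at most `v_{t+1}(y)`, since `K ≥ 0`. Integrating the resulting bound
`vₜ(x - d) ≤ vₜ(y - d) + K` (trivial for `t = 0`, where `v₀` vanishes) over the demand `d` and
discounting gives the inequality for `Gₜ`.
The only delicate point is that the real-valued infima are genuine, i.e. that `Gₜ` is bounded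
below; this follows from `vₜ ≥ 0`, proved by induction on `t`.
-/

/-- Lemma 3.1 (finite horizon): for the value functions `vₜ` and functions
`Gₜ` of the transformed inventory model with zero unit ordering cost,
`vₜ(x) ≤ vₜ(y) + K` for `t ≥ 1` and
`Gₜ(y) - Gₜ(x) ≥ g(y) - g(x) - αK` whenever `x ≤ y`. -/
theorem stmt5
    (μ : Measure ℝ) [IsProbabilityMeasure μ]
    (hμ0 : μ (Set.Iio 0) = 0)
    (α K : ℝ) (hα : α ∈ Set.Ioo (0 : ℝ) 1) (hK : 0 < K)
    (g : ℝ → ℝ) (hgnn : ∀ x, 0 ≤ g x)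
    (v G : ℕ → ℝ → ℝ)
    (hv0 : ∀ x, v 0 x = 0)
    (hint : ∀ t x, Integrable (fun d => v t (x - d)) μ)
    (hG : ∀ t x, G t x = g x + α * ∫ d, v t (x - d) ∂μ)
    (hrec : ∀ t x, v (t + 1) x = min (K + ⨅ y : Set.Ici x, G t (y : ℝ)) (G t x)) :
    ∀ x y : ℝ, x ≤ y →
      (∀ t : ℕ, 1 ≤ t → v t x ≤ v t y + K) ∧
      (∀ t : ℕ, G t y - G t x ≥ g y - g x - α * K) := by
  obtain ⟨hα0, -⟩ := hα
  have G_nonneg_of : ∀ t, (∀ x, 0 ≤ v t x) → ∀ x, 0 ≤ G t x := fun t hv x => by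
    rw [hG]
    exact add_nonneg (hgnn x) (mul_nonneg hα0.le (integral_nonneg fun d => hv _))
  have v_nonneg : ∀ t x, 0 ≤ v t x := by
    intro t
    induction t with
    | zero => exact fun x => (hv0 x).ge
    | succ t ih =>
      intro x
      rw [hrec]
      have hinf : 0 ≤ ⨅ y : Set.Ici x, G t (y : ℝ) :=
        Real.iInf_nonneg fun y => G_nonneg_of t ih _
      exact le_min (by linarith) (G_nonneg_of t ih x)
  have hbdd : ∀ t x, BddBelow (Set.range fun y : Set.Ici x => G t y.1) := fun t x =>
    ⟨0, by rintro _ ⟨y, rfl⟩; exact G_nonneg_of t (v_nonneg t) _⟩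
  have v_le : ∀ t x y, x ≤ y → v t x ≤ v t y + K := by
    intro t x y hxy
    cases t with
    | zero => rw [hv0, hv0]; linarith
    | succ t =>
      have inf_le : ∀ z, x ≤ z → ⨅ y : Set.Ici x, G t (y : ℝ) ≤ G t z := fun z hz =>
        ciInf_le (hbdd t x) (⟨z, hz⟩ : Set.Ici x)
      have inf_mono : ⨅ z : Set.Ici x, G t (z : ℝ) ≤ ⨅ z : Set.Ici y, G t (z : ℝ) :=
        le_ciInf fun z => inf_le z (hxy.trans z.2)
      have hinf : ⨅ z : Set.Ici x, G t (z : ℝ) ≤ v (t + 1) y := by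
        rw [hrec]
        exact le_min (by linarith) (inf_le y hxy)
      have hx : v (t + 1) x ≤ K + ⨅ z : Set.Ici x, G t (z : ℝ) := by
        rw [hrec]
        exact min_le_left _ _
      linarith
  intro x y hxy
  refine ⟨fun t _ => v_le t x y hxy, fun t => ?_⟩
  have hI : ∫ d, v t (x - d) ∂μ ≤ (∫ d, v t (y - d) ∂μ) + K := by
    calc ∫ d, v t (x - d) ∂μ ≤ ∫ d, (v t (y - d) + K) ∂μ :=
          integral_mono (hint t x) ((hint t y).add (integrable_const K))
            fun d => v_le t _ _ (by linarith)
      _ = (∫ d, v t (y - d) ∂μ) + K := by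
          rw [integral_add (hint t y) (integrable_const K)]
          simp
  have := mul_le_mul_of_nonneg_left hI hα0.le
  rw [hG t x, hG t y]
  linarith
end

section
/- Let μ be a Borel probability measure on ℝ with μ((−∞,0)) = 0, let α ∈ (0,1), K > 0, and let g : ℝ → ℝ be nonnegative. Let v, G : ℝ → ℝ satisfy: v is nonnegative; for every x the function d ↦ v(x − d) is μ-integrable; G(x) = g(x) + α ∫ v(x − d) dμ(d) for all x; and v(x) = min{ K + inf_{y ≥ x} G(y), G(x) } for all x. Then for all x ≤ y: v(x) ≤ v(y) + K and G(y) − G(x) ≥ g(y) − g(x) − αK. -/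
open MeasureTheory Filter Set

/-!
Both inequalities come from one observation: the function `x ↦ ⨅ y ≥ x, G y` is nondecreasing and
lies below `G`. Ordering up from `x` therefore costs at most `K + ⨅ z ≥ y, G z`, which is at most
`K + v y` whichever branch of the minimum `v y` is attained on. Applying this bound to `x - d` and
`y - d` and integrating over the demand `d` gives the inequality for `G`.
-/

/-- Lemma 3.1 (infinite horizon): for the infinite-horizon discounted value
function `v` and the function `G` of the transformed inventory model with zero
unit ordering cost, `v(x) ≤ v(y) + K` and
`G(y) - G(x) ≥ g(y) - g(x) - αK` whenever `x ≤ y`. -/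
theorem stmt6
    (μ : Measure ℝ) [IsProbabilityMeasure μ]
    (hμ0 : μ (Set.Iio 0) = 0)
    (α K : ℝ) (hα : α ∈ Set.Ioo (0 : ℝ) 1) (hK : 0 < K)
    (g : ℝ → ℝ) (hgnn : ∀ x, 0 ≤ g x)
    (v G : ℝ → ℝ)
    (hvnn : ∀ x, 0 ≤ v x)
    (hint : ∀ x : ℝ, Integrable (fun d => v (x - d)) μ)
    (hG : ∀ x, G x = g x + α * ∫ d, v (x - d) ∂μ)
    (hoe : ∀ x, v x = min (K + ⨅ y : Set.Ici x, G (y : ℝ)) (G x)) :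
    ∀ x y : ℝ, x ≤ y → v x ≤ v y + K ∧ G y - G x ≥ g y - g x - α * K := by
  obtain ⟨hα0, -⟩ := hα
  have hGnn : ∀ x, 0 ≤ G x := fun x => by
    rw [hG x]
    exact add_nonneg (hgnn x) (mul_nonneg hα0.le (integral_nonneg fun d => hvnn (x - d)))
  -- Boundedness below makes the real-valued infima genuine rather than junk values.
  have hbdd : ∀ x : ℝ, BddBelow (Set.range fun y : Set.Ici x => G (y : ℝ)) := fun x =>
    ⟨0, by rintro _ ⟨y, rfl⟩; exact hGnn y⟩
  have hv : ∀ x y : ℝ, x ≤ y → v x ≤ v y + K := by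
    intro x y hxy
    have hmono : (⨅ z : Set.Ici x, G (z : ℝ)) ≤ ⨅ z : Set.Ici y, G (z : ℝ) :=
      le_ciInf fun z => ciInf_le (hbdd x) ⟨(z : ℝ), hxy.trans z.2⟩
    have hle : (⨅ z : Set.Ici y, G (z : ℝ)) ≤ G y :=
      ciInf_le (hbdd y) ⟨y, Set.self_mem_Ici⟩
    have hx : v x ≤ K + ⨅ z : Set.Ici x, G (z : ℝ) := (hoe x).trans_le (min_le_left _ _)
    have hy : (⨅ z : Set.Ici y, G (z : ℝ)) ≤ v y := by
      rw [hoe y]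
      exact le_min (by linarith) hle
    linarith
  intro x y hxy
  refine ⟨hv x y hxy, ?_⟩
  have hI : ∫ d, v (x - d) ∂μ ≤ ∫ d, v (y - d) ∂μ + K := by
    calc ∫ d, v (x - d) ∂μ ≤ ∫ d, (v (y - d) + K) ∂μ :=
          integral_mono (hint x) ((hint y).add (integrable_const K))
            fun d => hv (x - d) (y - d) (by linarith)
      _ = (∫ d, v (y - d) ∂μ) + K := by
          rw [integral_add (hint y) (integrable_const K)]
          simp
  rw [hG x, hG y]
  have := mul_le_mul_of_nonneg_left hI hα0.le
  linarith
end

section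
/- Let μ be a Borel probability measure on ℝ with μ((−∞,0)) = 0, let α ∈ (0,1) and K > 0. Let g_α : ℝ → ℝ have a least minimizer r (g_α(r) = inf g_α and g_α(x) > g_α(r) for every x < r). Let v̄ : ℝ → ℝ with d ↦ v̄(x − d) μ-integrable for every x, let S, y ∈ ℝ, and set Ḡ(x) := g_α(x) + α ∫ v̄(x − d) dμ(d) and m̄ := Ḡ(S). Assume: Ḡ(x) ≥ m̄ for all x; v̄(x) ≥ m̄ for all x; v̄(x) = K + m̄ for all x ≤ y; and Ḡ(x) ≥ Ḡ(y) = K + m̄ for all x ≤ y. Then y ≤ r. -/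
open MeasureTheory Filter Set

/-!
Suppose `r < y`. Below `y` the value function is the constant `K + mbar` and demand is a.s.
nonnegative, so there `Gbar x = gα x + α (K + mbar)`. Taking `x = r`,
the bound `K + mbar = Gbar y ≤ Gbar r` says that the minimal value `gα r` is at least
`(1 - α) (K + mbar)`. Since `vbar ≥ mbar`, this forces `mbar = Gbar S ≥ (1 - α) (K + mbar) + α mbar = mbar + (1 - α) K`,
which is impossible because `K > 0` and `α < 1`.
-/

/-- Lemma 6.2: every possible optimal lower threshold `y` of the discounted
problem satisfies `y ≤ r`, where `r` is the least minimizer of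
`g_α(x) = E[h_α(x - D)]`. -/
theorem stmt10
    (μ : Measure ℝ) [IsProbabilityMeasure μ]
    (hμ0 : μ (Set.Iio 0) = 0)
    (α K : ℝ) (hα : α ∈ Set.Ioo (0 : ℝ) 1) (hK : 0 < K)
    (gα : ℝ → ℝ)
    (r : ℝ) (hr1 : ∀ x, gα r ≤ gα x) (hr2 : ∀ x < r, gα r < gα x)
    (vbar : ℝ → ℝ)
    (hint : ∀ x : ℝ, Integrable (fun d => vbar (x - d)) μ)
    (S y : ℝ)
    (Gbar : ℝ → ℝ)
    (hGbar : ∀ x, Gbar x = gα x + α * ∫ d, vbar (x - d) ∂μ)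
    (mbar : ℝ) (hmbar : mbar = Gbar S)
    (hGmin : ∀ x, mbar ≤ Gbar x)
    (hvmin : ∀ x, mbar ≤ vbar x)
    (hv : ∀ x ≤ y, vbar x = K + mbar)
    (hGleft : ∀ x ≤ y, Gbar y ≤ Gbar x)
    (hGy : Gbar y = K + mbar) :
    y ≤ r := by
  by_contra! hlt
  have hnonneg : ∀ᵐ d ∂μ, 0 ≤ d := by
    rw [ae_iff]
    simp only [not_le]
    exact hμ0
  have hconst : ∀ x ≤ y, ∫ d, vbar (x - d) ∂μ = K + mbar := by
    intro x hx
    have hae : (fun d => vbar (x - d)) =ᵐ[μ] fun _ => K + mbar := by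
      filter_upwards [hnonneg] with d hd
      exact hv _ (by linarith)
    rw [integral_congr_ae hae]
    simp
  have hlower : mbar ≤ ∫ d, vbar (S - d) ∂μ := by
    have h := integral_mono (integrable_const mbar) (hint S) (fun d => hvmin (S - d))
    simpa using h
  have hyr := hGleft r hlt.le
  have hGr := hGbar r
  have hGS := hGbar S
  rw [hconst r hlt.le] at hGr
  have hαlower := mul_le_mul_of_nonneg_left hlower hα.1.le
  have hgap : 0 < (1 - α) * K := mul_pos (sub_pos.2 hα.2) hK
  linarith [hr1 S]
end

section
/- Let g : ℝ → ℝ be continuous, c̄ > 0, and β ∈ [0,1). For each α ∈ [β,1] define g_α(x) := g(x) + (1 − α) c̄ x and suppose g_α has a least minimizer r_α (g_α(r_α) = inf g_α and g_α(x) > g_α(r_α) for x < r_α). Then r_α → r₁ as α → 1 from the left; that is, the map α ↦ r_α on [β,1) tends to r₁ along the filter of neighborhoods of 1 within [β,1). -/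
/-!
Comparing the minimality inequalities of `r α` and `r α'` shows that `r` is monotone on `[β, 1]`, so
`r β ≤ r α ≤ r 1`. Testing the minimality of `r α` against `r 1` then gives
`g (r α) ≤ g (r 1) + (1 - α) * cbar * (r 1 - r β)`. Given `a < r 1`, the continuous function `g`
stays above `g (r 1)` by a uniform gap on the compact interval `[r β, a]`, since `r 1` is the least
minimizer of `g`. Hence `r α` must leave this interval as `α` tends to `1`, which forces `a < r α`.
-/

open Filter Set

/-- Claim `r_α ↑ r₁` as `α ↑ 1` in the proof of Lemma 5.1: the least
minimizers `r_α` of `g_α(x) = g(x) + (1 - α) c̄ x` converge to `r₁` as the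
discount factor tends to `1` from the left. -/
theorem stmt12
    (g : ℝ → ℝ) (hgcont : Continuous g) (cbar : ℝ) (hc : 0 < cbar)
    (β : ℝ) (hβ : β ∈ Set.Ico (0 : ℝ) 1)
    (r : ℝ → ℝ)
    (hmin : ∀ α ∈ Set.Icc β 1, ∀ x : ℝ,
      g (r α) + (1 - α) * cbar * r α ≤ g x + (1 - α) * cbar * x)
    (hleast : ∀ α ∈ Set.Icc β 1, ∀ x < r α,
      g (r α) + (1 - α) * cbar * r α < g x + (1 - α) * cbar * x) :
    Tendsto r (nhdsWithin 1 (Set.Ico β 1)) (nhds (r 1)) := by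
  have mono : ∀ α ∈ Set.Icc β 1, ∀ α' ∈ Set.Icc β 1, α ≤ α' → r α ≤ r α' := by
    intro α hα α' hα' hle
    rcases hle.eq_or_lt with rfl | hlt
    · exact le_rfl
    have h1 := hmin α hα (r α')
    have h2 := hmin α' hα' (r α)
    by_contra! hcon
    nlinarith [mul_pos (mul_pos (sub_pos.2 hlt) hc) (sub_pos.2 hcon)]
  have hβ1 : β ∈ Set.Icc β 1 := ⟨le_rfl, hβ.2.le⟩
  have h11 : (1 : ℝ) ∈ Set.Icc β 1 := ⟨hβ.2.le, le_rfl⟩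
  rw [tendsto_order]
  constructor
  · intro a ha
    rcases lt_or_ge a (r β) with hab | hab
    · filter_upwards [self_mem_nhdsWithin] with α hα
      exact hab.trans_le (mono β hβ1 α ⟨hα.1, hα.2.le⟩ hα.1)
    obtain ⟨y, hy, hymin⟩ := isCompact_Icc.exists_isMinOn
      (Set.nonempty_Icc.2 hab) hgcont.continuousOn
    have hgap : g (r 1) < g y := by
      simpa using hleast 1 h11 y (hy.2.trans_lt ha)
    have hlim : Tendsto (fun α : ℝ => g (r 1) + (1 - α) * cbar * (r 1 - r β))
        (nhdsWithin 1 (Set.Ico β 1)) (nhds (g (r 1))) := by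
      have hcont : Continuous (fun α : ℝ => g (r 1) + (1 - α) * cbar * (r 1 - r β)) := by
        fun_prop
      simpa using (hcont.tendsto 1).mono_left nhdsWithin_le_nhds
    filter_upwards [self_mem_nhdsWithin, hlim.eventually_lt_const hgap] with α hα hsmall
    by_contra! hra
    have hαI : α ∈ Set.Icc β 1 := ⟨hα.1, hα.2.le⟩
    have hlow := mono β hβ1 α hαI hα.1
    have hgy : g y ≤ g (r α) := hymin ⟨hlow, hra⟩
    have htest := hmin α hαI (r 1)
    nlinarith [mul_nonneg (mul_pos (sub_pos.2 hα.2) hc).le (sub_nonneg.2 hlow)]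
  · intro b hb
    filter_upwards [self_mem_nhdsWithin] with α hα
    exact (mono α ⟨hα.1, hα.2.le⟩ 1 h11 hα.2.le).trans_lt hb
end

section
/- Define h : ℝ → ℝ by h(x) = x + e²/5 for x > 0 and h(x) = e^{2−x} / ((x − 2)² + 1) for x ≤ 0, where e is Euler's number. Then h is convex on ℝ. -/
/-!
Let `q x = exp (2 - x) / ((x - 2)² + 1)` be the left branch. On `(-∞, 0]` it is antitone
(`antitone_leftBranch`) and convex (`convexOn_leftBranch`): with `t = 2 - x ≥ 2`, its first
derivative is `-exp t (t - 1)² / (t² + 1)²` and its second derivative is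
`exp t (t - 1) (t³ - 3t² + 5t + 1) / (t² + 1)³`, where
`t³ - 3t² + 5t + 1 = (t - 1)³ + 2t + 2 > 0`.

Since `q 0 = exp 2 / 5`, the two branches glue to the single formula
`h x = q (min x 0) + max x 0`. The first summand is a convex antitone function of a concave
function, hence convex, and the second is a maximum of two affine functions.
-/

/-- The branch of the cost function used on `x ≤ 0`, as a function on all of `ℝ`. -/
noncomputable def leftBranch (x : ℝ) : ℝ := Real.exp (2 - x) / ((x - 2) ^ 2 + 1)

/-- The first derivative of `leftBranch`. -/
noncomputable def leftBranchDeriv (x : ℝ) : ℝ :=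
  -(Real.exp (2 - x) * (1 - x) ^ 2 / ((x - 2) ^ 2 + 1) ^ 2)

lemma hasDerivAt_leftBranch (x : ℝ) : HasDerivAt leftBranch (leftBranchDeriv x) x := by
  have hd : (x - 2) ^ 2 + 1 ≠ 0 := by positivity
  have he : HasDerivAt (fun y : ℝ => Real.exp (2 - y)) (Real.exp (2 - x) * (-1)) x :=
    ((hasDerivAt_id x).const_sub 2).exp
  have hp : HasDerivAt (fun y : ℝ => (y - 2) ^ 2 + 1) (2 * (x - 2)) x := by
    simpa using (((hasDerivAt_id x).sub_const 2).pow 2).add_const 1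
  refine (he.div hp hd).congr_deriv ?_
  unfold leftBranchDeriv
  field_simp
  ring

/-- The cubic factor is `t³ - 3t² + 5t + 1 = (t - 1)³ + 2t + 2` at `t = 2 - x`. -/
lemma hasDerivAt_leftBranchDeriv (x : ℝ) :
    HasDerivAt leftBranchDeriv
      (Real.exp (2 - x) * (1 - x) * ((1 - x) ^ 3 + 2 * (2 - x) + 2) /
        ((x - 2) ^ 2 + 1) ^ 3) x := by
  have hd : (x - 2) ^ 2 + 1 ≠ 0 := by positivity
  have he : HasDerivAt (fun y : ℝ => Real.exp (2 - y)) (Real.exp (2 - x) * (-1)) x :=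
    ((hasDerivAt_id x).const_sub 2).exp
  have hn : HasDerivAt (fun y : ℝ => (1 - y) ^ 2) (-(2 * (1 - x))) x := by
    exact (((hasDerivAt_id x).const_sub 1).pow 2).congr_deriv (by simp)
  have hp : HasDerivAt (fun y : ℝ => (y - 2) ^ 2 + 1) (2 * (x - 2)) x := by
    simpa using (((hasDerivAt_id x).sub_const 2).pow 2).add_const 1
  refine ((he.mul hn).div (hp.pow 2) (pow_ne_zero 2 hd)).neg.congr_deriv ?_
  simp only [Pi.mul_apply, Pi.pow_apply]
  field_simp
  push_cast
  ring

lemma antitone_leftBranch : Antitone leftBranch := by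
  refine antitone_of_deriv_nonpos (fun x => (hasDerivAt_leftBranch x).differentiableAt) ?_
  intro x
  rw [(hasDerivAt_leftBranch x).deriv]
  exact neg_nonpos.mpr (by positivity)

lemma convexOn_leftBranch : ConvexOn ℝ (Set.Iic 0) leftBranch := by
  refine convexOn_of_hasDerivWithinAt2_nonneg (convex_Iic 0)
    (fun x _ => (hasDerivAt_leftBranch x).continuousAt.continuousWithinAt)
    (fun x _ => (hasDerivAt_leftBranch x).hasDerivWithinAt)
    (fun x _ => (hasDerivAt_leftBranchDeriv x).hasDerivWithinAt) ?_
  intro x hx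
  rw [interior_Iic, Set.mem_Iio] at hx
  have h1 : 0 < 1 - x := by linarith
  have h2 : 0 < 2 - x := by linarith
  positivity

/-- Remark 7.1: the holding/backlog cost function
`h(x) = x + e²/5` for `x > 0` and `h(x) = e^{2-x}/((x-2)² + 1)` for `x ≤ 0`
is convex on `ℝ`. -/
theorem stmt15 :
    ConvexOn ℝ Set.univ (fun x : ℝ =>
      if 0 < x then x + Real.exp 2 / 5
      else Real.exp (2 - x) / ((x - 2) ^ 2 + 1)) := by
  have himg : (fun x : ℝ => min x 0) '' Set.univ = Set.Iic 0 := by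
    ext y
    constructor
    · rintro ⟨x, -, rfl⟩
      exact min_le_right x 0
    · intro hy
      exact ⟨y, trivial, min_eq_left hy⟩
  have hmin : ConcaveOn ℝ Set.univ (fun x : ℝ => min x 0) :=
    (concaveOn_id convex_univ).inf (concaveOn_const 0 convex_univ)
  have hmax : ConvexOn ℝ Set.univ (fun x : ℝ => max x 0) :=
    (convexOn_id convex_univ).sup (convexOn_const 0 convex_univ)
  have hcomp : ConvexOn ℝ Set.univ (leftBranch ∘ fun x : ℝ => min x 0) :=
    ConvexOn.comp_concaveOn (himg ▸ convexOn_leftBranch) hmin (antitone_leftBranch.antitoneOn _)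
  refine (hcomp.add hmax).congr ?_
  intro x _
  by_cases hx : 0 < x
  · simp only [Pi.add_apply, Function.comp_apply, min_eq_right hx.le, max_eq_left hx.le,
      if_pos hx, leftBranch]
    norm_num
    ring
  · have hx' : x ≤ 0 := not_lt.mp hx
    simp only [Pi.add_apply, Function.comp_apply, min_eq_left hx', max_eq_right hx',
      if_neg hx, leftBranch, add_zero]
end

section
/- Define h : ℝ → ℝ by h(x) = x + e²/5 for x > 0 and h(x) = e^{2−x} / ((x − 2)² + 1) for x ≤ 0. Then the nonnegative function t ↦ h(−t) · t e^{−t} has infinite Lebesgue integral over (0, +∞): ∫_0^∞ h(0 − t) · t e^{−t} dt = +∞; equivalently, E[h(0 − S₂)] = +∞ when S₂ has the Erlang density f(t) = t e^{−t} on (0, ∞). -/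
open MeasureTheory

/-!
For `t > 0` the integrand equals `e² t / ((t + 2)² + 1)`: the factor `e^{-t}` of the Erlang density
cancels the exponential in `h (-t)`, and the extra factor `t` turns the integrable tail of order
`t⁻²` into one of order `t⁻¹`. On `(1, ∞)` it is at least `t⁻¹ / 10`, so a finite integral would
make `t⁻¹` integrable at infinity, contradicting `not_integrableOn_Ioi_inv`.
-/

/-- Remark 7.1: for the Erlang density `t e^{-t}` on `(0, ∞)` (distribution of
`S₂ = D₁ + D₂`), the transformed expected holding cost is infinite at `0`:
`∫_0^∞ h(0 - t) · t e^{-t} dt = +∞`. -/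
theorem stmt17
    (h : ℝ → ℝ)
    (hdef : ∀ x : ℝ, h x =
      if 0 < x then x + Real.exp 2 / 5
      else Real.exp (2 - x) / ((x - 2) ^ 2 + 1)) :
    ∫⁻ t in Set.Ioi (0 : ℝ),
      ENNReal.ofReal (h (0 - t) * (t * Real.exp (-t))) = ⊤ := by
  by_contra htop
  -- On `(0, ∞)` the exponential decay of the density cancels the growth of `h`.
  have hform : ∀ t : ℝ, 0 < t →
      h (0 - t) * (t * Real.exp (-t)) = Real.exp 2 * (t / ((t + 2) ^ 2 + 1)) := by
    intro t ht
    have hexp : Real.exp (2 - (0 - t)) * Real.exp (-t) = Real.exp 2 := by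
      rw [← Real.exp_add]; congr 1; ring
    rw [hdef, if_neg (by linarith), ← hexp]
    have hsq : (0 - t - 2) ^ 2 = (t + 2) ^ 2 := by ring
    rw [hsq]
    ring
  have hlower : ∀ t : ℝ, 1 < t → t⁻¹ ≤ 10 * (h (0 - t) * (t * Real.exp (-t))) := by
    intro t ht
    rw [hform t (by linarith)]
    -- `(t + 2)² + 1 ≤ 10 t²` for `1 ≤ t`, with equality at `t = 1`.
    have hfrac : t⁻¹ ≤ 10 * (t / ((t + 2) ^ 2 + 1)) := by
      rw [← mul_div_assoc, inv_eq_one_div, div_le_div_iff₀ (by linarith) (by positivity)]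
      nlinarith
    have hone : (1 : ℝ) ≤ Real.exp 2 := Real.one_le_exp (by norm_num)
    have hpos : 0 ≤ t / ((t + 2) ^ 2 + 1) := div_nonneg (by linarith) (by positivity)
    nlinarith
  have hinv : ∫⁻ t in Set.Ioi (1 : ℝ), ENNReal.ofReal t⁻¹ < ⊤ := by
    calc ∫⁻ t in Set.Ioi (1 : ℝ), ENNReal.ofReal t⁻¹
        ≤ ∫⁻ t in Set.Ioi (1 : ℝ),
            10 * ENNReal.ofReal (h (0 - t) * (t * Real.exp (-t))) := by
          refine setLIntegral_mono' measurableSet_Ioi fun t ht => ?_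
          refine (ENNReal.ofReal_le_ofReal (hlower t ht)).trans_eq ?_
          rw [ENNReal.ofReal_mul (by norm_num)]
          norm_num
      _ = 10 * ∫⁻ t in Set.Ioi (1 : ℝ),
            ENNReal.ofReal (h (0 - t) * (t * Real.exp (-t))) :=
          lintegral_const_mul' _ _ (by norm_num)
      _ ≤ 10 * ∫⁻ t in Set.Ioi (0 : ℝ),
            ENNReal.ofReal (h (0 - t) * (t * Real.exp (-t))) := by
          gcongr
          norm_num
      _ < ⊤ := ENNReal.mul_lt_top (by norm_num) (lt_top_iff_ne_top.2 htop)
  refine not_integrableOn_Ioi_inv (a := (1 : ℝ)) ⟨measurable_inv.aestronglyMeasurable, ?_⟩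
  rw [hasFiniteIntegral_iff_ofReal]
  · exact hinv
  · filter_upwards [ae_restrict_mem measurableSet_Ioi] with t ht
    exact inv_nonneg.2 (zero_le_one.trans (le_of_lt ht))
end
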